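/- Let n ≥ 3, γ > −min(2,n), α > 1 with α ≥ max(1, 1+γ/n), γ/(α−1) < s ≤ n, α ≤ q ≤ ∞, 0 < r ≤ ∞, and assume s/n + 1/q > 0, s/n + 1/q < 1 or (s/n + 1/q = 1 and r ≤ 1), and the double critical condition s/n + 1/q = 1/q_c = 1/Q_c. Assume moreover that either (q < ∞ and r ≤ α − 1) or r ≤ min(1, α − 1). Let T > 0 and u₀ ∈ 𝒦̇^s_{q,r}(ℝⁿ). If u₁, u₂ : [0,T] → 𝒦̇^s_{q,r}(ℝⁿ) are mild solutions of the Hardy–Hénon equation on (0,T) with initial data u₀, with u₁(0) = u₂(0) = u₀ and with t ↦ u_i(t) continuous on [0,T] with respect to the Herz quasi-norm ‖·‖_{K̇^s_{q,r}} for i = 1,2, then for every t ∈ [0,T], u₁(t) = u₂(t) almost everywhere on ℝⁿ. -/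

import Mathlib

open MeasureTheory Set ENNReal Filter

noncomputable section

abbrev Euc (n : ℕ) : Type := EuclideanSpace ℝ (Fin n)

def annulus (n : ℕ) (j : ℤ) : Set (Euc n) :=
  {x : Euc n | (2 : ℝ) ^ (j - 1) ≤ ‖x‖ ∧ ‖x‖ < (2 : ℝ) ^ j}

def herzNorm (n : ℕ) (s : ℝ) (q r : ℝ≥0∞) (f : Euc n → ℝ) : ℝ≥0∞ :=
  if r = ⊤ then
    ⨆ j : ℤ, ENNReal.ofReal ((2 : ℝ) ^ ((j : ℝ) * s)) *
      eLpNorm ((annulus n j).indicator f) q volume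
  else
    (∑' j : ℤ, (ENNReal.ofReal ((2 : ℝ) ^ ((j : ℝ) * s)) *
      eLpNorm ((annulus n j).indicator f) q volume) ^ r.toReal) ^ (1 / r.toReal)

def heatKernel (n : ℕ) (t : ℝ) (x y : Euc n) : ℝ :=
  (4 * Real.pi * t) ^ (-(n : ℝ) / 2) * Real.exp (-‖x - y‖ ^ 2 / (4 * t))

def heatSemigroup (n : ℕ) (t : ℝ) (f : Euc n → ℝ) (x : Euc n) : ℝ :=
  ∫ y, heatKernel n t x y * f y

def nonlin (n : ℕ) (γ α : ℝ) (v : Euc n → ℝ) (x : Euc n) : ℝ :=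
  ‖x‖ ^ γ * |v x| ^ (α - 1) * v x

/-- `u` is a mild solution of the Hardy–Hénon equation
`∂ₜu - Δu = |x|^γ |u|^{α-1} u` on `(0,T) × ℝⁿ` with initial data `u₀`:
`u` is measurable, and for a.e. `(t,x) ∈ (0,T) × ℝⁿ` the relevant integrals
converge absolutely and the Duhamel formula holds. -/
def IsMildSolution (n : ℕ) (γ α T : ℝ) (u₀ : Euc n → ℝ) (u : ℝ → Euc n → ℝ) : Prop :=
  Measurable (Function.uncurry u) ∧
  ∀ᵐ p : ℝ × Euc n ∂((volume.restrict (Set.Ioo (0 : ℝ) T)).prod volume),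
    (Integrable (fun y => heatKernel n p.1 p.2 y * u₀ y) volume) ∧
    (Integrable (fun z : ℝ × Euc n =>
        heatKernel n (p.1 - z.1) p.2 z.2 * nonlin n γ α (u z.1) z.2)
      ((volume.restrict (Set.Ioo (0 : ℝ) p.1)).prod volume)) ∧
    u p.1 p.2 = heatSemigroup n p.1 u₀ p.2 +
      ∫ z : ℝ × Euc n, heatKernel n (p.1 - z.1) p.2 z.2 * nonlin n γ α (u z.1) z.2
        ∂((volume.restrict (Set.Ioo (0 : ℝ) p.1)).prod volume)

/-- `f` belongs to `𝒦̇^s_{q,r}(ℝⁿ)`, the closure of `C_c^∞(ℝⁿ)` in the Herz space. -/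
def MemHerzClosure (n : ℕ) (s : ℝ) (q r : ℝ≥0∞) (f : Euc n → ℝ) : Prop :=
  herzNorm n s q r f < ⊤ ∧
  ∀ ε : ℝ, 0 < ε → ∃ g : Euc n → ℝ, ContDiff ℝ (⊤ : ℕ∞) g ∧ HasCompactSupport g ∧
    herzNorm n s q r (fun x => f x - g x) < ENNReal.ofReal ε

/-- `t ↦ u t` is continuous on `I` with respect to the Herz quasi-norm. -/
def HerzContinuousOn (n : ℕ) (s : ℝ) (q r : ℝ≥0∞) (u : ℝ → Euc n → ℝ) (I : Set ℝ) : Prop :=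
  ∀ t₀ ∈ I, ∀ ε : ℝ, 0 < ε → ∃ δ : ℝ, 0 < δ ∧ ∀ t ∈ I, |t - t₀| < δ →
    herzNorm n s q r (fun x => u t x - u t₀ x) < ENNReal.ofReal ε

/-!
Let `w = u₁ - u₂` and `V = α |x|^γ (|u₁|^{α-1} + |u₂|^{α-1})`. Subtracting the two Duhamel formulas
gives `|w(t)| ≤ ∫₀ᵗ e^{(t-τ)Δ} (V |w|)(τ) dτ`. Multiplying by `V(t)` and integrating in space turns
this into a scalar Volterra inequality `Φ(t) ≤ ∫₀ᵗ κₜ(t-τ) Φ(τ) dτ` for `Φ = ∫ V |w| dx`, where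
`κₜ(θ)` dominates the norm of `f ↦ V(t) e^{θΔ} f` on `L¹`.

The relation `s/n + 1/q = 1/q_c` makes every dyadic annulus contribute to `κₜ` a time profile whose
integral is scale invariant. Since `r ≤ α - 1` these contributions are summable, so the integral of
the profile generated by `|x|^γ |f|^{α-1}` is at most `C ‖f‖^{α-1}` in the Herz quasi-norm. The
relation `s/n + 1/q = 1/Q_c` bounds `∫ |x|^γ |f|^α dx` by `D ‖f‖^α`, so `Φ` is finite. Over short
times the integral of the profile of the single function `uᵢ(a)` is small, and by continuity it is
small for all `uᵢ(t)` with `t` near `a`, uniformly in `t`. The Volterra inequality is then a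
contraction just after `a`, so the vanishing of `Φ` before `a` extends past `a`, hence to `(0, T)`.
Continuity in the Herz quasi-norm passes from almost every `t` to all `t`.
-/

open scoped Topology

section PowerInequalities

theorem rpow_sub_rpow_mul_le {a b β : ℝ} (hb : 0 ≤ b) (hba : b ≤ a) (hβ : 0 ≤ β) :
    (a ^ β - b ^ β) * b ≤ β * a ^ β * (a - b) := by
  rcases (hb.trans hba).eq_or_lt with rfl | ha
  · simp [hba.antisymm hb]
  have bernoulli : 1 + (β + 1) * (b / a - 1) ≤ (1 + (b / a - 1)) ^ (β + 1) :=
    one_add_mul_self_le_rpow_one_add (by linarith [div_nonneg hb ha.le]) (by linarith)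
  have homogeneous : a ^ β * a + (β + 1) * a ^ β * (b - a) ≤ b ^ β * b := by
    have h := mul_le_mul_of_nonneg_left bernoulli (Real.rpow_nonneg ha.le (β + 1))
    rw [add_sub_cancel, ← Real.mul_rpow ha.le (by positivity), mul_div_cancel₀ _ ha.ne',
      Real.rpow_add_one' hb (by positivity), Real.rpow_add_one ha.ne'] at h
    refine Eq.trans_le ?_ h
    field_simp
  linarith

theorem norm_rpow_smul_sub_le {E : Type*} [NormedAddCommGroup E] [NormedSpace ℝ E] {β : ℝ}
    (hβ : 0 ≤ β) (a b : E) :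
    ‖‖a‖ ^ β • a - ‖b‖ ^ β • b‖ ≤ (β + 1) * (‖a‖ ^ β + ‖b‖ ^ β) * ‖a - b‖ := by
  wlog hba : ‖b‖ ≤ ‖a‖
  · rw [norm_sub_rev, norm_sub_rev a, add_comm (‖a‖ ^ β)]
    exact this hβ b a (le_of_not_ge hba)
  have hpow : ‖b‖ ^ β ≤ ‖a‖ ^ β := by gcongr
  calc ‖‖a‖ ^ β • a - ‖b‖ ^ β • b‖
      = ‖‖a‖ ^ β • (a - b) + (‖a‖ ^ β - ‖b‖ ^ β) • b‖ := by congr 1; module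
    _ ≤ ‖a‖ ^ β * ‖a - b‖ + (‖a‖ ^ β - ‖b‖ ^ β) * ‖b‖ := by
        refine (norm_add_le _ _).trans_eq ?_
        rw [norm_smul, norm_smul, Real.norm_of_nonneg (by positivity),
          Real.norm_of_nonneg (sub_nonneg.2 hpow)]
    _ ≤ ‖a‖ ^ β * ‖a - b‖ + β * ‖a‖ ^ β * (‖a‖ - ‖b‖) :=
        add_le_add le_rfl (rpow_sub_rpow_mul_le (norm_nonneg b) hba hβ)
    _ ≤ ‖a‖ ^ β * ‖a - b‖ + β * ‖a‖ ^ β * ‖a - b‖ := by gcongr; exact norm_sub_norm_le a b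
    _ = (β + 1) * ‖a‖ ^ β * ‖a - b‖ := by ring
    _ ≤ (β + 1) * (‖a‖ ^ β + ‖b‖ ^ β) * ‖a - b‖ := by
        gcongr; exact le_add_of_nonneg_right (by positivity)

theorem add_rpow_mul_add_le {β : ℝ} (hβ : 0 ≤ β) (a b : ℝ≥0∞) :
    (a ^ β + b ^ β) * (a + b) ≤ 4 * (a ^ (β + 1) + b ^ (β + 1)) := by
  have hmul (c : ℝ≥0∞) : c ^ β * c = c ^ (β + 1) := by
    rw [ENNReal.rpow_add_of_nonneg _ _ hβ zero_le_one, ENNReal.rpow_one]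
  wlog hba : b ≤ a
  · rw [add_comm (a ^ β), add_comm a, add_comm (a ^ (β + 1))]
    exact this hβ b a hmul (le_of_not_ge hba)
  calc (a ^ β + b ^ β) * (a + b) ≤ (a ^ β + a ^ β) * (a + a) := by gcongr
    _ = 4 * a ^ (β + 1) := by rw [← hmul]; ring
    _ ≤ 4 * (a ^ (β + 1) + b ^ (β + 1)) := by gcongr; exact le_self_add

theorem tsum_rpow_le_rpow_tsum {ι : Type*} (a : ι → ℝ≥0∞) {p : ℝ} (hp : 1 ≤ p) :
    ∑' i, a i ^ p ≤ (∑' i, a i) ^ p := by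
  have hmul (c : ℝ≥0∞) : c * c ^ (p - 1) = c ^ p := by
    conv_lhs => enter [1]; rw [← ENNReal.rpow_one c]
    rw [← ENNReal.rpow_add_of_nonneg _ _ zero_le_one (by linarith), add_sub_cancel]
  calc ∑' i, a i ^ p ≤ ∑' i, a i * (∑' i, a i) ^ (p - 1) := by
        refine ENNReal.tsum_le_tsum fun i => ?_
        rw [← hmul (a i)]
        gcongr
        exact ENNReal.le_tsum i
    _ = (∑' i, a i) ^ p := by rw [ENNReal.tsum_mul_right, hmul]

end PowerInequalities

section VolterraInequality

theorem ae_restrict_Ioo_of_Ioo_of_Ioo {P : ℝ → Prop} {a b c : ℝ}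
    (hab : ∀ᵐ t ∂volume.restrict (Ioo a b), P t) (hbc : ∀ᵐ t ∂volume.restrict (Ioo b c), P t) :
    ∀ᵐ t ∂volume.restrict (Ioo a c), P t := by
  rw [ae_restrict_iff' measurableSet_Ioo] at hab hbc ⊢
  filter_upwards [hab, hbc, Measure.ae_ne volume b] with t hab hbc htb ht
  exact htb.lt_or_gt.elim (fun h => hab ⟨ht.1, h⟩) fun h => hbc ⟨h, ht.2⟩

theorem isClosed_setOf_ae_restrict_Ioo (P : ℝ → Prop) (a : ℝ) :
    IsClosed {b | ∀ᵐ t ∂volume.restrict (Ioo a b), P t} := by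
  refine isClosed_of_closure_subset fun b hb => ?_
  obtain ⟨u, hu, hlim⟩ := mem_closure_iff_seq_limit.1 hb
  refine ae_restrict_of_ae_restrict_of_subset (fun t ht => ?_) ((ae_restrict_iUnion_iff _ _).2 hu)
  obtain ⟨k, hk⟩ := (hlim.eventually_const_lt ht.2).exists
  exact mem_iUnion.2 ⟨k, ht.1, hk⟩

theorem ae_restrict_Ioo_of_forall_exists_gt {P : ℝ → Prop} {a T : ℝ} (haT : a ≤ T)
    (hstep : ∀ b ∈ Ico a T, (∀ᵐ t ∂volume.restrict (Ioo a b), P t) →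
      ∃ c > b, ∀ᵐ t ∂volume.restrict (Ioo b c), P t) :
    ∀ᵐ t ∂volume.restrict (Ioo a T), P t := by
  refine IsClosed.Icc_subset_of_forall_exists_gt
    (s := {b | ∀ᵐ t ∂volume.restrict (Ioo a b), P t})
    ((isClosed_setOf_ae_restrict_Ioo P a).inter isClosed_Icc) (by simp) ?_ (right_mem_Icc.2 haT)
  rintro b ⟨hb, hbT⟩ y hy
  obtain ⟨c, hbc, hP⟩ := hstep b hbT hb
  refine ⟨min y c, ae_restrict_Ioo_of_Ioo_of_Ioo hb ?_, lt_min hy hbc, min_le_left y c⟩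
  exact ae_restrict_of_ae_restrict_of_subset (Ioo_subset_Ioo_right (min_le_right y c)) hP

theorem ae_eq_zero_of_le_const_mul_essSup {Ω : Type*} [MeasurableSpace Ω] {μ : Measure Ω}
    {Φ : Ω → ℝ≥0∞} {c M : ℝ≥0∞} (hc : c < 1) (hM : M ≠ ∞) (hbdd : ∀ᵐ t ∂μ, Φ t ≤ M)
    (hΦ : ∀ᵐ t ∂μ, Φ t ≤ c * essSup Φ μ) : Φ =ᵐ[μ] 0 := by
  rw [← ENNReal.essSup_eq_zero_iff]
  by_contra hne
  have hfin : essSup Φ μ ≠ ∞ := ne_top_of_le_ne_top hM (essSup_le_of_ae_le M hbdd)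
  have hlt : c * essSup Φ μ < 1 * essSup Φ μ := ENNReal.mul_lt_mul_left hne hfin hc
  rw [one_mul] at hlt
  exact (essSup_le_of_ae_le _ hΦ).not_gt hlt

theorem setLIntegral_Ioo_comp_sub_left (κ : ℝ → ℝ≥0∞) (a t : ℝ) :
    ∫⁻ τ in Ioo a t, κ (t - τ) = ∫⁻ θ in Ioo 0 (t - a), κ θ := by
  have h := (Measure.measurePreserving_sub_left volume t).setLIntegral_comp_preimage_emb
    (MeasurableEquiv.subLeft t).measurableEmbedding κ (Ioo 0 (t - a))
  rwa [preimage_const_sub_Ioo, sub_zero, _root_.sub_sub_cancel] at h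

theorem setLIntegral_convolution_le {κ Φ : ℝ → ℝ≥0∞} {N : ℝ≥0∞} {a b t : ℝ} (hN : N ≠ ∞)
    (hab : Φ =ᵐ[volume.restrict (Ioo a b)] 0) (hbt : ∀ᵐ τ ∂volume.restrict (Ioo b t), Φ τ ≤ N) :
    ∫⁻ τ in Ioo a t, κ (t - τ) * Φ τ ≤ (∫⁻ θ in Ioo 0 (t - b), κ θ) * N := by
  have hpointwise : ∀ᵐ τ ∂volume.restrict (Ioo a t),
      κ (t - τ) * Φ τ ≤ (Ioo b t).indicator (fun τ => κ (t - τ) * N) τ := by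
    refine ae_restrict_Ioo_of_Ioo_of_Ioo (b := b) ?_ ?_
    · filter_upwards [hab] with τ hτ
      simp [hτ]
    · filter_upwards [hbt, ae_restrict_mem measurableSet_Ioo] with τ hτ hmem
      rw [indicator_of_mem hmem]
      gcongr
  calc ∫⁻ τ in Ioo a t, κ (t - τ) * Φ τ
      ≤ ∫⁻ τ in Ioo a t, (Ioo b t).indicator (fun τ => κ (t - τ) * N) τ :=
        lintegral_mono_ae hpointwise
    _ ≤ ∫⁻ τ in Ioo b t, κ (t - τ) * N :=
        (setLIntegral_le_lintegral _ _).trans_eq (lintegral_indicator measurableSet_Ioo _)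
    _ = (∫⁻ θ in Ioo 0 (t - b), κ θ) * N := by
        rw [lintegral_mul_const' _ _ hN, setLIntegral_Ioo_comp_sub_left]

theorem ae_eq_zero_of_volterra {Φ : ℝ → ℝ≥0∞} {c M : ℝ≥0∞} {t₀ a b : ℝ} (hc : c < 1) (hM : M ≠ ∞)
    (hpast : Φ =ᵐ[volume.restrict (Ioo t₀ a)] 0)
    (hbdd : ∀ᵐ t ∂volume.restrict (Ioo a b), Φ t ≤ M)
    (hvolterra : ∀ᵐ t ∂volume.restrict (Ioo a b), ∃ κ : ℝ → ℝ≥0∞,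
      ∫⁻ θ in Ioo 0 (b - a), κ θ ≤ c ∧ Φ t ≤ ∫⁻ τ in Ioo t₀ t, κ (t - τ) * Φ τ) :
    Φ =ᵐ[volume.restrict (Ioo a b)] 0 := by
  refine ae_eq_zero_of_le_const_mul_essSup hc hM hbdd ?_
  filter_upwards [hvolterra, ae_restrict_mem measurableSet_Ioo] with t ⟨κ, hκ, hΦ⟩ ht
  calc Φ t ≤ ∫⁻ τ in Ioo t₀ t, κ (t - τ) * Φ τ := hΦ
    _ ≤ (∫⁻ θ in Ioo 0 (t - a), κ θ) * essSup Φ (volume.restrict (Ioo a b)) :=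
        setLIntegral_convolution_le (ne_top_of_le_ne_top hM (essSup_le_of_ae_le M hbdd)) hpast
          (ae_restrict_of_ae_restrict_of_subset (Ioo_subset_Ioo_right ht.2.le)
            (ENNReal.ae_le_essSup Φ))
    _ ≤ c * essSup Φ (volume.restrict (Ioo a b)) := by
        gcongr
        exact (lintegral_mono_set (Ioo_subset_Ioo_right (by linarith [ht.2]))).trans hκ

end VolterraInequality

section KatoBound

variable {X : Type*} [MeasurableSpace X] {K : ℝ → X → X → ℝ≥0∞} {ν : Measure X}
  {V W : X → ℝ≥0∞} {I J : Set ℝ} {c c' : ℝ≥0∞}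

/-- A Kato-type bound for the potential `V` relative to the integral kernels `K θ`, `θ > 0`: the
norms on `L¹(ν)` of the operators `f ↦ V · (K θ f)`, which are `sup_y ∫ K θ x y V x dν(x)`,
integrate over `θ ∈ I` to at most `c`. Asking for a measurable majorant `κ` of these norms spares us
the measurability of the supremum. -/
def KatoBoundOn (K : ℝ → X → X → ℝ≥0∞) (ν : Measure X) (V : X → ℝ≥0∞) (I : Set ℝ)
    (c : ℝ≥0∞) : Prop :=
  ∃ κ : ℝ → ℝ≥0∞, Measurable κ ∧ (∀ θ > 0, ∀ y, ∫⁻ x, K θ x y * V x ∂ν ≤ κ θ) ∧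
    ∫⁻ θ in I, κ θ ≤ c

namespace KatoBoundOn

theorem mono (h : KatoBoundOn K ν W I c) (hVW : V ≤ W) (hJI : J ⊆ I) (hc : c ≤ c') :
    KatoBoundOn K ν V J c' := by
  obtain ⟨κ, hκ, hbound, hint⟩ := h
  refine ⟨κ, hκ, fun θ hθ y => (lintegral_mono fun x => ?_).trans (hbound θ hθ y),
    ((lintegral_mono_set hJI).trans hint).trans hc⟩
  gcongr
  exact hVW x

theorem add (hV : KatoBoundOn K ν V I c) (hW : KatoBoundOn K ν W I c')
    (hK : ∀ θ y, Measurable fun x => K θ x y) (hVm : Measurable V) :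
    KatoBoundOn K ν (V + W) I (c + c') := by
  obtain ⟨κ, hκ, hbound, hint⟩ := hV
  obtain ⟨κ', hκ', hbound', hint'⟩ := hW
  refine ⟨κ + κ', hκ.add hκ', fun θ hθ y => ?_, ?_⟩
  · simp only [Pi.add_apply, mul_add]
    rw [lintegral_add_left (f := fun x => K θ x y * V x) ((hK θ y).mul hVm)]
    exact add_le_add (hbound θ hθ y) (hbound' θ hθ y)
  · simp only [Pi.add_apply]
    rw [lintegral_add_left hκ]
    exact add_le_add hint hint'

theorem const_smul (h : KatoBoundOn K ν V I c) {a : ℝ≥0∞} (ha : a ≠ ∞) :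
    KatoBoundOn K ν (a • V) I (a * c) := by
  obtain ⟨κ, hκ, hbound, hint⟩ := h
  refine ⟨fun θ => a * κ θ, hκ.const_mul a, fun θ hθ y => ?_, ?_⟩
  · simp only [Pi.smul_apply, smul_eq_mul, mul_left_comm _ a]
    rw [lintegral_const_mul' _ _ ha]
    gcongr
    exact hbound θ hθ y
  · rw [lintegral_const_mul' _ _ ha]
    gcongr

theorem exists_Ioo (h : KatoBoundOn K ν V (Ioi 0) c) (hc : c ≠ ∞) {η : ℝ≥0∞} (hη : η ≠ 0) :
    ∃ d > 0, KatoBoundOn K ν V (Ioo 0 d) η := by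
  obtain ⟨κ, hκ, hbound, hint⟩ := h
  obtain ⟨δ, hδ, hsmall⟩ := exists_pos_setLIntegral_lt_of_measure_lt
    (μ := volume.restrict (Ioi (0 : ℝ))) (ne_top_of_le_ne_top hc hint) hη
  obtain ⟨d, -, hdδ⟩ := ENNReal.lt_iff_exists_real_btwn.1 hδ
  have hd0 : 0 < d := ENNReal.ofReal_pos.1 (by simpa using hdδ.1)
  have hsmall_d : volume.restrict (Ioi 0) (Ioo 0 d) < δ := by
    refine (Measure.restrict_apply_le _ _).trans_lt ?_
    rw [Real.volume_Ioo, sub_zero]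
    exact hdδ.2
  refine ⟨d, hd0, κ, hκ, hbound, ?_⟩
  simpa [Measure.restrict_restrict measurableSet_Ioo, Ioo_inter_Ioi] using
    (hsmall (Ioo 0 d) hsmall_d).le

end KatoBoundOn

end KatoBound

section Duhamel

variable {X : Type*} [MeasurableSpace X] {K : ℝ → X → X → ℝ≥0∞} {ν : Measure X} [SFinite ν]

theorem lintegral_mul_duhamel_le {P : X → ℝ≥0∞} {F : ℝ × X → ℝ≥0∞} {κ : ℝ → ℝ≥0∞} (t : ℝ)
    (hK : Measurable fun z : ℝ × X × X => K z.1 z.2.1 z.2.2) (hP : Measurable P)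
    (hF : Measurable F) (hκ : ∀ θ > 0, ∀ y, ∫⁻ x, K θ x y * P x ∂ν ≤ κ θ) :
    ∫⁻ x, P x * ∫⁻ z, K (t - z.1) x z.2 * F z ∂((volume.restrict (Ioo 0 t)).prod ν) ∂ν ≤
      ∫⁻ τ in Ioo 0 t, κ (t - τ) * ∫⁻ y, F (τ, y) ∂ν := by
  have hKt : Measurable fun p : X × ℝ × X => K (t - p.2.1) p.1 p.2.2 :=
    hK.comp (by fun_prop : Measurable fun p : X × ℝ × X => (t - p.2.1, p.1, p.2.2))
  have hKF : Measurable fun p : X × ℝ × X => K (t - p.2.1) p.1 p.2.2 * F p.2 :=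
    hKt.mul (hF.comp measurable_snd)
  have hPKF : Measurable fun p : X × ℝ × X => P p.1 * (K (t - p.2.1) p.1 p.2.2 * F p.2) :=
    (hP.comp measurable_fst).mul hKF
  calc ∫⁻ x, P x * ∫⁻ z, K (t - z.1) x z.2 * F z ∂((volume.restrict (Ioo 0 t)).prod ν) ∂ν
      = ∫⁻ x, ∫⁻ z, P x * (K (t - z.1) x z.2 * F z) ∂((volume.restrict (Ioo 0 t)).prod ν) ∂ν :=
        lintegral_congr fun x => (lintegral_const_mul _ (hKF.comp measurable_prodMk_left)).symm
    _ = ∫⁻ z, ∫⁻ x, P x * (K (t - z.1) x z.2 * F z) ∂ν ∂((volume.restrict (Ioo 0 t)).prod ν) :=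
        lintegral_lintegral_swap hPKF.aemeasurable
    _ = ∫⁻ τ in Ioo 0 t, ∫⁻ y, ∫⁻ x, P x * (K (t - τ) x y * F (τ, y)) ∂ν ∂ν :=
        lintegral_prod _ hPKF.lintegral_prod_left'.aemeasurable
    _ ≤ ∫⁻ τ in Ioo 0 t, ∫⁻ y, κ (t - τ) * F (τ, y) ∂ν := by
        refine setLIntegral_mono' measurableSet_Ioo fun τ hτ => lintegral_mono fun y => ?_
        have hKP : Measurable fun x => K (t - τ) x y * P x :=
          (hKt.comp (measurable_prodMk_right (y := (τ, y)))).mul hP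
        simp_rw [← mul_assoc, mul_comm (P _)]
        rw [lintegral_mul_const _ hKP]
        gcongr
        exact hκ _ (sub_pos.2 hτ.2) y
    _ = ∫⁻ τ in Ioo 0 t, κ (t - τ) * ∫⁻ y, F (τ, y) ∂ν :=
        lintegral_congr fun τ => lintegral_const_mul _ (hF.comp measurable_prodMk_left)

variable {V W : ℝ → X → ℝ≥0∞} {T : ℝ}

theorem ae_lintegral_mul_le_of_duhamel
    (hK : Measurable fun z : ℝ × X × X => K z.1 z.2.1 z.2.2) (hV : Measurable (Function.uncurry V))
    (hW : Measurable (Function.uncurry W))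
    (hduhamel : ∀ᵐ p ∂(volume.restrict (Ioo 0 T)).prod ν, W p.1 p.2 ≤
      ∫⁻ z, K (p.1 - z.1) p.2 z.2 * (V z.1 z.2 * W z.1 z.2)
        ∂((volume.restrict (Ioo 0 p.1)).prod ν)) :
    ∀ᵐ t ∂volume.restrict (Ioo 0 T), ∀ κ : ℝ → ℝ≥0∞,
      (∀ θ > 0, ∀ y, ∫⁻ x, K θ x y * V t x ∂ν ≤ κ θ) →
      ∫⁻ x, V t x * W t x ∂ν ≤ ∫⁻ τ in Ioo 0 t, κ (t - τ) * ∫⁻ y, V τ y * W τ y ∂ν := by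
  filter_upwards [Measure.ae_ae_of_ae_prod hduhamel] with t ht κ hκ
  refine le_trans (lintegral_mono_ae ?_)
    (lintegral_mul_duhamel_le t hK (hV.comp measurable_prodMk_left) (hV.mul hW) hκ)
  filter_upwards [ht] with x hx
  exact mul_le_mul_right hx (V t x)

theorem ae_mul_eq_zero_of_duhamel (hT : 0 ≤ T)
    (hK : Measurable fun z : ℝ × X × X => K z.1 z.2.1 z.2.2) (hV : Measurable (Function.uncurry V))
    (hW : Measurable (Function.uncurry W))
    (hduhamel : ∀ᵐ p ∂(volume.restrict (Ioo 0 T)).prod ν, W p.1 p.2 ≤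
      ∫⁻ z, K (p.1 - z.1) p.2 z.2 * (V z.1 z.2 * W z.1 z.2)
        ∂((volume.restrict (Ioo 0 p.1)).prod ν))
    (hlocal : ∀ a ∈ Ico 0 T, ∃ M ≠ ∞, ∃ c < 1, ∃ d > 0, ∀ᶠ t in 𝓝[>] a,
      ∫⁻ x, V t x * W t x ∂ν ≤ M ∧ KatoBoundOn K ν (V t) (Ioo 0 d) c) :
    ∀ᵐ t ∂volume.restrict (Ioo 0 T), ∀ᵐ x ∂ν, V t x * W t x = 0 := by
  suffices hzero : (fun t => ∫⁻ x, V t x * W t x ∂ν) =ᵐ[volume.restrict (Ioo 0 T)] 0 by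
    filter_upwards [hzero] with t ht
    exact (lintegral_eq_zero_iff ((hV.comp measurable_prodMk_left).mul
      (hW.comp measurable_prodMk_left))).1 ht
  refine ae_restrict_Ioo_of_forall_exists_gt hT fun a ha hpast => ?_
  obtain ⟨M, hM, c, hc, d, hd, hnear⟩ := hlocal a ha
  obtain ⟨e, hae : a < e, he⟩ := mem_nhdsGT_iff_exists_Ioo_subset.1 hnear
  obtain ⟨b, hab, hbmin⟩ := exists_between
    (lt_min (lt_min hae ha.2) (by linarith : a < a + d))
  have hbe : b < e := hbmin.trans_le ((min_le_left _ _).trans (min_le_left _ _))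
  have hbT : b < T := hbmin.trans_le ((min_le_left _ _).trans (min_le_right _ _))
  have hbd : b < a + d := hbmin.trans_le (min_le_right _ _)
  have hnear_ab : ∀ᵐ t ∂volume.restrict (Ioo a b),
      ∫⁻ x, V t x * W t x ∂ν ≤ M ∧ KatoBoundOn K ν (V t) (Ioo 0 d) c :=
    (ae_restrict_iff' measurableSet_Ioo).2 (.of_forall fun t ht => he ⟨ht.1, ht.2.trans hbe⟩)
  refine ⟨b, hab, ae_eq_zero_of_volterra hc hM hpast (hnear_ab.mono fun t ht => ht.1) ?_⟩
  filter_upwards [hnear_ab, ae_restrict_of_ae_restrict_of_subset (Ioo_subset_Ioo ha.1 hbT.le)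
    (ae_lintegral_mul_le_of_duhamel hK hV hW hduhamel)] with t ⟨_, κ, _, hκ, hint⟩ hΦ
  exact ⟨κ, (lintegral_mono_set (Ioo_subset_Ioo_right (by linarith))).trans hint, hΦ κ hκ⟩

end Duhamel

section DyadicAnnuli

theorem measurableSet_annulus (n : ℕ) (j : ℤ) : MeasurableSet (annulus n j) :=
  (measurableSet_le measurable_const measurable_norm).inter
    (measurableSet_lt measurable_norm measurable_const)

theorem pairwise_disjoint_annulus (n : ℕ) : Pairwise (Function.onFun Disjoint (annulus n)) := by
  intro i j hij
  refine Set.disjoint_left.2 fun x ⟨hxi, hxi'⟩ ⟨hxj, hxj'⟩ => hij ?_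
  have hji : i - 1 < j := (zpow_lt_zpow_iff_right₀ _root_.one_lt_two).1 (hxi.trans_lt hxj')
  have hij : j - 1 < i := (zpow_lt_zpow_iff_right₀ _root_.one_lt_two).1 (hxj.trans_lt hxi')
  omega

theorem iUnion_annulus (n : ℕ) : ⋃ j, annulus n j = {0}ᶜ := by
  ext x
  simp only [mem_iUnion, mem_compl_iff, mem_singleton_iff]
  constructor
  · rintro ⟨j, hj, -⟩ rfl
    exact (_root_.zpow_pos two_pos (j - 1)).not_ge (by simpa using hj)
  · intro hx
    obtain ⟨k, hk⟩ := exists_mem_Ico_zpow (norm_pos_iff.2 hx) (_root_.one_lt_two (α := ℝ))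
    exact ⟨k + 1, by simpa [annulus] using hk⟩

theorem lintegral_eq_tsum_annulus (n : ℕ) [NeZero n] (F : Euc n → ℝ≥0∞) :
    ∫⁻ x, F x = ∑' j, ∫⁻ x in annulus n j, F x := by
  rw [← lintegral_iUnion (measurableSet_annulus n) (pairwise_disjoint_annulus n), iUnion_annulus,
    Measure.restrict_eq_self_of_ae_mem (s := {(0 : Euc n)}ᶜ) (Measure.ae_ne volume 0)]

theorem ofReal_two_rpow (x : ℝ) : ENNReal.ofReal (2 ^ x) = 2 ^ x := by
  rw [← ENNReal.ofReal_rpow_of_pos two_pos, ENNReal.ofReal_ofNat]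

theorem two_rpow_add (x y : ℝ) : (2 : ℝ≥0∞) ^ (x + y) = 2 ^ x * 2 ^ y :=
  ENNReal.rpow_add x y two_ne_zero ofNat_ne_top

theorem two_zpow_rpow (j : ℤ) (x : ℝ) : ((2 : ℝ) ^ j) ^ x = 2 ^ (j * x) := by
  rw [← Real.rpow_intCast, ← Real.rpow_mul zero_le_two]

theorem volume_annulus_le (n : ℕ) (j : ℤ) :
    volume (annulus n j) ≤ 2 ^ ((j : ℝ) * n) * volume (Metric.ball (0 : Euc n) 1) := by
  have hsub : annulus n j ⊆ Metric.ball 0 (2 ^ j) := fun x hx => by simpa using hx.2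
  refine (measure_mono hsub).trans_eq ?_
  rw [Measure.addHaar_ball_of_pos _ _ (by positivity), ← ofReal_two_rpow, ← two_zpow_rpow,
    finrank_euclideanSpace_fin, Real.rpow_natCast]

theorem ofReal_norm_rpow_le_of_mem_annulus {n : ℕ} {j : ℤ} {x : Euc n} (hx : x ∈ annulus n j)
    (γ : ℝ) : ENNReal.ofReal (‖x‖ ^ γ) ≤ 2 ^ |γ| * 2 ^ (j * γ) := by
  rw [← two_rpow_add, ← ofReal_two_rpow]
  refine ENNReal.ofReal_le_ofReal ?_
  rcases le_or_gt 0 γ with hγ | hγ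
  · calc ‖x‖ ^ γ ≤ ((2 : ℝ) ^ j) ^ γ := Real.rpow_le_rpow (norm_nonneg x) hx.2.le hγ
      _ ≤ 2 ^ (|γ| + j * γ) := by
          rw [two_zpow_rpow]
          exact Real.rpow_le_rpow_of_exponent_le one_le_two (by linarith [abs_nonneg γ])
  · calc ‖x‖ ^ γ ≤ ((2 : ℝ) ^ (j - 1)) ^ γ :=
          Real.rpow_le_rpow_of_nonpos (by positivity) hx.1 hγ.le
      _ = 2 ^ (|γ| + j * γ) := by
          rw [two_zpow_rpow, abs_of_neg hγ]
          push_cast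
          ring_nf

end DyadicAnnuli

section WeightedPower

variable {n : ℕ} {γ s β p : ℝ} {q r : ℝ≥0∞}

/-- The weighted power `|x|^γ |f(x)|^β`, with values in `[0, ∞]`. It occurs with `β = α - 1` in the
potential of the linearized equation and with `β = α` in the nonlinearity. -/
def weightedPow (γ β : ℝ) (f : Euc n → ℝ) (x : Euc n) : ℝ≥0∞ :=
  ENNReal.ofReal (‖x‖ ^ γ) * ‖f x‖ₑ ^ β

/-- The `j`-th term `2^{js} ‖f χ_{A_j}‖_{L^q}` of the Herz quasi-norm. -/
def herzPiece (s : ℝ) (q : ℝ≥0∞) (f : Euc n → ℝ) (j : ℤ) : ℝ≥0∞ :=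
  2 ^ (j * s) * eLpNorm ((annulus n j).indicator f) q volume

@[fun_prop]
theorem measurable_weightedPow {f : Euc n → ℝ} (hf : Measurable f) :
    Measurable (weightedPow γ β f) := by
  unfold weightedPow
  fun_prop

theorem weightedPow_add_le (hβ : 0 ≤ β) (f g : Euc n → ℝ) :
    weightedPow γ β (f + g) ≤ (2 ^ β : ℝ≥0∞) • (weightedPow γ β f + weightedPow γ β g) := by
  intro x
  simp only [weightedPow, Pi.add_apply, Pi.smul_apply, smul_eq_mul]
  calc ENNReal.ofReal (‖x‖ ^ γ) * ‖f x + g x‖ₑ ^ β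
      ≤ ENNReal.ofReal (‖x‖ ^ γ) * (2 ^ β * (‖f x‖ₑ ^ β + ‖g x‖ₑ ^ β)) := by
        gcongr
        exact (ENNReal.rpow_le_rpow (enorm_add_le _ _) hβ).trans
          (ENNReal.add_rpow_le_two_rpow_mul_rpow_add_rpow _ _ hβ)
    _ = _ := by ring

theorem lintegral_weightedPow_add_le (hβ : 0 ≤ β) {f : Euc n → ℝ} (hf : Measurable f)
    (g : Euc n → ℝ) :
    ∫⁻ x, weightedPow γ β (f + g) x ≤
      2 ^ β * ((∫⁻ x, weightedPow γ β f x) + ∫⁻ x, weightedPow γ β g x) := by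
  rw [← lintegral_add_left (measurable_weightedPow hf),
    ← lintegral_const_mul' _ _ (rpow_ne_top_of_nonneg hβ ofNat_ne_top)]
  exact lintegral_mono (weightedPow_add_le hβ f g)

theorem weightedPow_sub_comm (f g : Euc n → ℝ) :
    weightedPow γ β (f - g) = weightedPow γ β (g - f) := by
  ext x
  simp only [weightedPow, Pi.sub_apply, enorm_sub_rev]

theorem weightedPow_eq_zero_iff (hβ : 0 < β) {f : Euc n → ℝ} {x : Euc n} (hx : x ≠ 0) :
    weightedPow γ β f x = 0 ↔ f x = 0 := by
  have hweight : ENNReal.ofReal (‖x‖ ^ γ) ≠ 0 :=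
    (ENNReal.ofReal_pos.2 (Real.rpow_pos_of_pos (norm_pos_iff.2 hx) γ)).ne'
  rw [weightedPow, mul_eq_zero_iff_left hweight, ENNReal.rpow_eq_zero_iff_of_pos hβ,
    enorm_eq_zero]

theorem tsum_herzPiece_rpow_le (hr : 0 < r) (hrβ : r ≤ ENNReal.ofReal β) (f : Euc n → ℝ) :
    ∑' j, herzPiece s q f j ^ β ≤ herzNorm n s q r f ^ β := by
  have hr_top : r ≠ ∞ := ne_top_of_le_ne_top ofReal_ne_top hrβ
  have hr_pos : 0 < r.toReal := toReal_pos hr.ne' hr_top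
  have hβ : 0 < β := ENNReal.ofReal_pos.1 (hr.trans_le hrβ)
  have hβr : r.toReal * (β / r.toReal) = β := mul_div_cancel₀ β hr_pos.ne'
  calc ∑' j, herzPiece s q f j ^ β = ∑' j, (herzPiece s q f j ^ r.toReal) ^ (β / r.toReal) := by
        simp only [← ENNReal.rpow_mul, hβr]
    _ ≤ (∑' j, herzPiece s q f j ^ r.toReal) ^ (β / r.toReal) :=
        tsum_rpow_le_rpow_tsum _ ((one_le_div hr_pos).2 (toReal_le_of_le_ofReal hβ.le hrβ))
    _ = herzNorm n s q r f ^ β := by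
        simp only [herzNorm, if_neg hr_top, ofReal_two_rpow, ← ENNReal.rpow_mul, herzPiece,
          one_div_mul_eq_div]

theorem lintegral_annulus_weightedPow_le_eLpNorm (hβ : 0 < β) (hp : 0 < p) {f : Euc n → ℝ}
    (hf : Measurable f) (j : ℤ) :
    (∫⁻ x in annulus n j, weightedPow γ β f x ^ p) ^ (1 / p) ≤
      2 ^ |γ| * 2 ^ (j * γ) *
        eLpNorm ((annulus n j).indicator f) (ENNReal.ofReal (β * p)) volume ^ β := by
  have hβp : 0 < β * p := mul_pos hβ hp
  have hweight : ∫⁻ x in annulus n j, weightedPow γ β f x ^ p ≤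
      (2 ^ |γ| * 2 ^ (j * γ)) ^ p * ∫⁻ x in annulus n j, ‖f x‖ₑ ^ (β * p) := by
    rw [← lintegral_const_mul _ (by fun_prop)]
    refine setLIntegral_mono (by fun_prop) fun x hx => ?_
    rw [weightedPow, ENNReal.mul_rpow_of_nonneg _ _ hp.le, ← ENNReal.rpow_mul]
    gcongr
    exact ofReal_norm_rpow_le_of_mem_annulus hx γ
  calc (∫⁻ x in annulus n j, weightedPow γ β f x ^ p) ^ (1 / p)
      ≤ ((2 ^ |γ| * 2 ^ (j * γ)) ^ p * ∫⁻ x in annulus n j, ‖f x‖ₑ ^ (β * p)) ^ (1 / p) := by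
        gcongr
    _ = 2 ^ |γ| * 2 ^ (j * γ) * (∫⁻ x in annulus n j, ‖f x‖ₑ ^ (β * p)) ^ (1 / p) := by
        rw [ENNReal.mul_rpow_of_nonneg _ _ (by positivity), ← ENNReal.rpow_mul,
          mul_one_div_cancel hp.ne', ENNReal.rpow_one]
    _ = _ := by
        rw [eLpNorm_indicator_eq_eLpNorm_restrict (measurableSet_annulus n j),
          eLpNorm_eq_lintegral_rpow_enorm_toReal (ENNReal.ofReal_pos.2 hβp).ne' ofReal_ne_top,
          ENNReal.toReal_ofReal hβp.le, ← ENNReal.rpow_mul]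
        congr 2
        field_simp

theorem eLpNorm_annulus_le_mul_herzPiece {m : ℝ≥0∞} (hm : m ≠ 0) (hmq : m ≤ q) {f : Euc n → ℝ}
    (hf : Measurable f) (j : ℤ) :
    eLpNorm ((annulus n j).indicator f) m volume ≤
      volume (Metric.ball (0 : Euc n) 1) ^ ((m⁻¹).toReal - (q⁻¹).toReal) *
        2 ^ (j * (n * ((m⁻¹).toReal - (q⁻¹).toReal) - s)) * herzPiece s q f j := by
  set e := (m⁻¹).toReal - (q⁻¹).toReal with he_def
  have he : 0 ≤ e :=
    sub_nonneg.2 (toReal_mono (inv_ne_top.2 hm) (ENNReal.inv_le_inv.2 hmq))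
  have hholder := eLpNorm_le_eLpNorm_mul_rpow_measure_univ (μ := volume.restrict (annulus n j)) hmq
    hf.aestronglyMeasurable
  rw [one_div, one_div, ← toReal_inv, ← toReal_inv, ← he_def, Measure.restrict_apply_univ,
    ← eLpNorm_indicator_eq_eLpNorm_restrict (measurableSet_annulus n j),
    ← eLpNorm_indicator_eq_eLpNorm_restrict (measurableSet_annulus n j)] at hholder
  have hscale : (2 : ℝ≥0∞) ^ (j * n * e) = 2 ^ (j * (n * e - s)) * 2 ^ (j * s) := by
    rw [← two_rpow_add]
    ring_nf
  calc eLpNorm ((annulus n j).indicator f) m volume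
      ≤ eLpNorm ((annulus n j).indicator f) q volume *
          (2 ^ ((j : ℝ) * n) * volume (Metric.ball (0 : Euc n) 1)) ^ e := by
        refine hholder.trans ?_
        gcongr
        exact volume_annulus_le n j
    _ = _ := by
        rw [ENNReal.mul_rpow_of_nonneg _ _ he, ← ENNReal.rpow_mul, hscale, herzPiece]
        ring

theorem exists_lintegral_annulus_weightedPow_le (hβ : 0 < β) (hp : 0 < p)
    (hq : ENNReal.ofReal (β * p) ≤ q) (γ s : ℝ) :
    ∃ C ≠ ∞, ∀ f : Euc n → ℝ, Measurable f → ∀ j : ℤ,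
      (∫⁻ x in annulus n j, weightedPow γ β f x ^ p) ^ (1 / p) ≤
        C * 2 ^ (j * (γ + n / p - β * (s + n * (q⁻¹).toReal))) * herzPiece s q f j ^ β := by
  have hβp : 0 < β * p := mul_pos hβ hp
  have hm : ENNReal.ofReal (β * p) ≠ 0 := (ENNReal.ofReal_pos.2 hβp).ne'
  have hm_inv : ((ENNReal.ofReal (β * p))⁻¹).toReal = (β * p)⁻¹ := by
    rw [toReal_inv, ENNReal.toReal_ofReal hβp.le]
  have he : 0 ≤ (β * p)⁻¹ - (q⁻¹).toReal :=
    hm_inv ▸ sub_nonneg.2 (toReal_mono (inv_ne_top.2 hm) (ENNReal.inv_le_inv.2 hq))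
  set ω := volume (Metric.ball (0 : Euc n) 1) ^ ((β * p)⁻¹ - (q⁻¹).toReal) with hω
  have hω_top : ω ≠ ∞ := rpow_ne_top_of_nonneg he measure_ball_lt_top.ne
  refine ⟨2 ^ |γ| * ω ^ β, mul_ne_top (rpow_ne_top_of_nonneg (abs_nonneg γ) ofNat_ne_top)
    (rpow_ne_top_of_nonneg hβ.le hω_top), fun f hf j => ?_⟩
  have hpiece := eLpNorm_annulus_le_mul_herzPiece (s := s) hm hq hf j
  rw [hm_inv, ← hω] at hpiece
  set e := n * ((β * p)⁻¹ - (q⁻¹).toReal) - s with he_def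
  have hscale : (2 : ℝ≥0∞) ^ (j * (γ + n / p - β * (s + n * (q⁻¹).toReal))) =
      2 ^ (j * γ) * 2 ^ (j * e * β) := by
    rw [← two_rpow_add, he_def]
    congr 1
    field_simp
    ring
  calc (∫⁻ x in annulus n j, weightedPow γ β f x ^ p) ^ (1 / p)
      ≤ 2 ^ |γ| * 2 ^ (j * γ) * (ω * 2 ^ (j * e) * herzPiece s q f j) ^ β :=
        (lintegral_annulus_weightedPow_le_eLpNorm hβ hp hf j).trans (by gcongr)
    _ = _ := by
        rw [hscale, ENNReal.mul_rpow_of_nonneg _ _ hβ.le, ENNReal.mul_rpow_of_nonneg _ _ hβ.le,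
          ← ENNReal.rpow_mul 2]
        ring

theorem exists_lintegral_weightedPow_le [NeZero n] (hr : 0 < r) (hrβ : r ≤ ENNReal.ofReal β)
    (hq : ENNReal.ofReal β ≤ q) (hscale : β * (s + n * (q⁻¹).toReal) = γ + n) :
    ∃ D ≠ ∞, ∀ f : Euc n → ℝ, Measurable f →
      ∫⁻ x, weightedPow γ β f x ≤ D * herzNorm n s q r f ^ β := by
  have hβ : 0 < β := ENNReal.ofReal_pos.1 (hr.trans_le hrβ)
  obtain ⟨D, hD, hannulus⟩ := exists_lintegral_annulus_weightedPow_le (n := n) (p := 1) (q := q) hβ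
    one_pos (by rwa [mul_one]) γ s
  simp only [hscale, div_one, sub_self, mul_zero, ENNReal.rpow_zero, mul_one, ENNReal.rpow_one]
    at hannulus
  refine ⟨D, hD, fun f hf => ?_⟩
  calc ∫⁻ x, weightedPow γ β f x
      = ∑' j, ∫⁻ x in annulus n j, weightedPow γ β f x := lintegral_eq_tsum_annulus n _
    _ ≤ ∑' j, D * herzPiece s q f j ^ β := ENNReal.tsum_le_tsum (hannulus f hf)
    _ = D * ∑' j, herzPiece s q f j ^ β := ENNReal.tsum_mul_left
    _ ≤ D * herzNorm n s q r f ^ β := by gcongr; exact tsum_herzPiece_rpow_le hr hrβ f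

end WeightedPower

section HeatKernel

variable {n : ℕ} {t : ℝ}

@[fun_prop]
theorem measurable_heatKernel (n : ℕ) :
    Measurable fun z : ℝ × Euc n × Euc n => heatKernel n z.1 z.2.1 z.2.2 := by
  unfold heatKernel
  fun_prop

theorem heatKernel_nonneg (ht : 0 ≤ t) (x y : Euc n) : 0 ≤ heatKernel n t x y := by
  unfold heatKernel
  positivity

theorem heatKernel_le (ht : 0 < t) (x y : Euc n) : heatKernel n t x y ≤ t ^ (-(n / 2 : ℝ)) := by
  have hexp : Real.exp (-‖x - y‖ ^ 2 / (4 * t)) ≤ 1 :=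
    Real.exp_le_one_iff.2 (div_nonpos_of_nonpos_of_nonneg (neg_nonpos.2 (sq_nonneg _))
      (by positivity))
  have hpow : (4 * Real.pi * t) ^ (-(n : ℝ) / 2) ≤ t ^ (-(n : ℝ) / 2) :=
    Real.rpow_le_rpow_of_nonpos ht (by nlinarith [Real.pi_gt_three])
      (div_nonpos_of_nonpos_of_nonneg (neg_nonpos.2 n.cast_nonneg) zero_le_two)
  calc heatKernel n t x y ≤ t ^ (-(n : ℝ) / 2) * 1 := by unfold heatKernel; gcongr
    _ = t ^ (-(n / 2 : ℝ)) := by rw [mul_one, neg_div]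

theorem integral_heatKernel (ht : 0 < t) (y : Euc n) : ∫ x, heatKernel n t x y = 1 := by
  have hgauss := GaussianFourier.integral_rexp_neg_mul_sq_norm (V := Euc n)
    (b := (4 * t)⁻¹) (by positivity)
  have hexponent (x : Euc n) : -‖x‖ ^ 2 / (4 * t) = -(4 * t)⁻¹ * ‖x‖ ^ 2 := by ring
  unfold heatKernel
  rw [integral_const_mul,
    integral_sub_right_eq_self (fun x : Euc n => Real.exp (-‖x‖ ^ 2 / (4 * t))) y]
  simp only [hexponent]
  rw [hgauss, finrank_euclideanSpace_fin, div_inv_eq_mul, ← mul_assoc, mul_comm Real.pi 4,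
    ← Real.rpow_add (by positivity), neg_div, neg_add_cancel, Real.rpow_zero]

theorem lintegral_heatKernel (ht : 0 < t) (y : Euc n) :
    ∫⁻ x, ENNReal.ofReal (heatKernel n t x y) = 1 := by
  have hint : Integrable fun x => heatKernel n t x y :=
    .of_integral_ne_zero (by rw [integral_heatKernel ht]; exact one_ne_zero)
  rw [← ofReal_integral_eq_lintegral_ofReal hint
    (.of_forall fun x => heatKernel_nonneg ht.le x y), integral_heatKernel ht, ofReal_one]

theorem lintegral_mul_le_rpow_mul_of_le {X : Type*} [MeasurableSpace X] {μ : Measure X}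
    {G F : X → ℝ≥0∞} {B : ℝ≥0∞} {p : ℝ} (hG : Measurable G) (hF : Measurable F)
    (hGB : ∀ x, G x ≤ B) (hG_one : ∫⁻ x, G x ∂μ ≤ 1) (hp : 1 ≤ p) :
    ∫⁻ x, G x * F x ∂μ ≤ B ^ (1 / p) * (∫⁻ x, F x ^ p ∂μ) ^ (1 / p) := by
  have hp_pos : 0 < p := one_pos.trans_le hp
  have hexp : 0 ≤ 1 - 1 / p := sub_nonneg.2 ((div_le_one hp_pos).2 hp)
  have hmass : μ.withDensity G univ ≤ 1 := by
    rwa [withDensity_apply _ MeasurableSet.univ, Measure.restrict_univ]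
  have hjensen := eLpNorm'_le_eLpNorm'_mul_rpow_measure_univ one_pos hp
    (hF.aestronglyMeasurable (μ := μ.withDensity G))
  simp only [eLpNorm'_eq_lintegral_enorm, enorm_eq_self, ENNReal.rpow_one, div_one] at hjensen
  rw [lintegral_withDensity_eq_lintegral_mul _ hG hF,
    lintegral_withDensity_eq_lintegral_mul _ hG (by fun_prop)] at hjensen
  calc ∫⁻ x, G x * F x ∂μ ≤ (∫⁻ x, G x * F x ^ p ∂μ) ^ (1 / p) * 1 := by
        refine hjensen.trans ?_
        gcongr
        · rfl
        · exact rpow_le_one hmass hexp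
    _ ≤ (∫⁻ x, B * F x ^ p ∂μ) ^ (1 / p) := by
        rw [mul_one]
        gcongr with x
        exact hGB x
    _ = _ := by
        rw [lintegral_const_mul _ (by fun_prop), ENNReal.mul_rpow_of_nonneg _ _ (by positivity)]

theorem setLIntegral_heatKernel_mul_le {p : ℝ} (ht : 0 < t) (hp : 1 ≤ p) (y : Euc n)
    (A : Set (Euc n)) {F : Euc n → ℝ≥0∞} (hF : Measurable F) :
    ∫⁻ x in A, ENNReal.ofReal (heatKernel n t x y) * F x ≤
      ENNReal.ofReal (t ^ (-(n / (2 * p)) : ℝ)) * (∫⁻ x in A, F x ^ p) ^ (1 / p) := by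
  have hbound (x : Euc n) : ENNReal.ofReal (heatKernel n t x y) ≤
      ENNReal.ofReal (t ^ (-(n / 2 : ℝ))) := ofReal_le_ofReal (heatKernel_le ht x y)
  have hmass : ∫⁻ x in A, ENNReal.ofReal (heatKernel n t x y) ≤ 1 :=
    (setLIntegral_le_lintegral _ _).trans (lintegral_heatKernel ht y).le
  refine (lintegral_mul_le_rpow_mul_of_le (by fun_prop) hF hbound hmass hp).trans_eq ?_
  rw [ENNReal.ofReal_rpow_of_nonneg (by positivity) (by positivity), ← Real.rpow_mul ht.le]
  congr 4
  field_simp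

end HeatKernel

section TimeProfile

/-- The time profile `min (t^{-a} L^{a-1}) (t^{-b} L^{b-1})` of the part of `V e^{tΔ}` living on a
dyadic annulus of radius `√L`. Its integral over `(0, ∞)` does not depend on `L`. -/
def timeProfile (a b L t : ℝ) : ℝ≥0∞ :=
  min (ENNReal.ofReal (t ^ (-a) * L ^ (a - 1))) (ENNReal.ofReal (t ^ (-b) * L ^ (b - 1)))

theorem measurable_timeProfile (a b L : ℝ) : Measurable (timeProfile a b L) := by
  unfold timeProfile
  fun_prop

variable {a b L : ℝ}

theorem setLIntegral_Ioc_profile_eq (ha : a < 1) (hL : 0 < L) :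
    ∫⁻ t in Ioc 0 L, ENNReal.ofReal (t ^ (-a) * L ^ (a - 1)) = ENNReal.ofReal (1 / (1 - a)) := by
  have hint : IntegrableOn (fun t : ℝ => t ^ (-a) * L ^ (a - 1)) (Ioc 0 L) :=
    (intervalIntegrable_iff_integrableOn_Ioc_of_le hL.le).1
      ((intervalIntegral.intervalIntegrable_rpow' (by linarith)).mul_const _)
  have hnonneg : 0 ≤ᵐ[volume.restrict (Ioc 0 L)] fun t : ℝ => t ^ (-a) * L ^ (a - 1) := by
    filter_upwards [ae_restrict_mem measurableSet_Ioc] with t ht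
    exact mul_nonneg (Real.rpow_nonneg ht.1.le _) (by positivity)
  have hexp : -a + 1 + (a - 1) = 0 := by ring
  rw [← ofReal_integral_eq_lintegral_ofReal hint hnonneg, integral_mul_const,
    ← intervalIntegral.integral_of_le hL.le, integral_rpow (.inl (by linarith)),
    Real.zero_rpow (by linarith), sub_zero, div_mul_eq_mul_div, ← Real.rpow_add hL, hexp,
    Real.rpow_zero, neg_add_eq_sub]

theorem setLIntegral_Ioi_profile_eq (hb : 1 < b) (hL : 0 < L) :
    ∫⁻ t in Ioi L, ENNReal.ofReal (t ^ (-b) * L ^ (b - 1)) = ENNReal.ofReal (1 / (b - 1)) := by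
  have hint : IntegrableOn (fun t : ℝ => t ^ (-b) * L ^ (b - 1)) (Ioi L) :=
    (integrableOn_Ioi_rpow_of_lt (by linarith) hL).mul_const _
  have hnonneg : 0 ≤ᵐ[volume.restrict (Ioi L)] fun t : ℝ => t ^ (-b) * L ^ (b - 1) := by
    filter_upwards [ae_restrict_mem measurableSet_Ioi] with t ht
    exact mul_nonneg (Real.rpow_nonneg (hL.trans ht).le _) (by positivity)
  have hexp : -b + 1 + (b - 1) = 0 := by ring
  rw [← ofReal_integral_eq_lintegral_ofReal hint hnonneg, integral_mul_const,
    integral_Ioi_rpow_of_lt (by linarith) hL, div_mul_eq_mul_div, neg_mul, ← Real.rpow_add hL,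
    hexp, Real.rpow_zero, neg_add_eq_sub, ← neg_sub b 1, neg_div_neg_eq]

theorem lintegral_timeProfile_le (ha : a < 1) (hb : 1 < b) (hL : 0 < L) :
    ∫⁻ t in Ioi 0, timeProfile a b L t ≤
      ENNReal.ofReal (1 / (1 - a)) + ENNReal.ofReal (1 / (b - 1)) := by
  calc ∫⁻ t in Ioi 0, timeProfile a b L t
      ≤ (∫⁻ t in Ioc 0 L, timeProfile a b L t) + ∫⁻ t in Ioi L, timeProfile a b L t := by
        rw [← Ioc_union_Ioi_eq_Ioi hL.le]
        exact lintegral_union_le _ _ _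
    _ ≤ (∫⁻ t in Ioc 0 L, ENNReal.ofReal (t ^ (-a) * L ^ (a - 1))) +
          ∫⁻ t in Ioi L, ENNReal.ofReal (t ^ (-b) * L ^ (b - 1)) :=
        add_le_add (lintegral_mono fun _ => min_le_left _ _)
          (lintegral_mono fun _ => min_le_right _ _)
    _ = _ := by rw [setLIntegral_Ioc_profile_eq ha hL, setLIntegral_Ioi_profile_eq hb hL]

end TimeProfile

section HeatKato

variable {n : ℕ} {γ s β p : ℝ} {q r : ℝ≥0∞}

theorem exists_lintegral_annulus_heatKernel_mul_weightedPow_le (hβ : 0 < β) (hp : 1 ≤ p)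
    (hq : ENNReal.ofReal (β * p) ≤ q) (hscale : β * (s + n * (q⁻¹).toReal) = γ + 2) :
    ∃ C ≠ ∞, ∀ f : Euc n → ℝ, Measurable f → ∀ j : ℤ, ∀ t > 0, ∀ y,
      ∫⁻ x in annulus n j, ENNReal.ofReal (heatKernel n t x y) * weightedPow γ β f x ≤
        C * herzPiece s q f j ^ β * ENNReal.ofReal
          (t ^ (-(n / (2 * p)) : ℝ) * ((2 : ℝ) ^ (2 * j : ℝ)) ^ (n / (2 * p) - 1 : ℝ)) := by
  have hp_pos : 0 < p := one_pos.trans_le hp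
  obtain ⟨C, hC, hannulus⟩ := exists_lintegral_annulus_weightedPow_le (n := n) hβ hp_pos hq γ s
  refine ⟨C, hC, fun f hf j t ht y => ?_⟩
  have hradius : (2 : ℝ≥0∞) ^ (j * (γ + n / p - β * (s + n * (q⁻¹).toReal))) =
      ENNReal.ofReal (((2 : ℝ) ^ (2 * j : ℝ)) ^ (n / (2 * p) - 1 : ℝ)) := by
    rw [hscale, ← Real.rpow_mul zero_le_two, ofReal_two_rpow]
    congr 1
    field_simp
    ring
  refine (setLIntegral_heatKernel_mul_le ht hp y _ (measurable_weightedPow hf)).trans ?_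
  calc ENNReal.ofReal (t ^ (-(n / (2 * p)) : ℝ)) *
        (∫⁻ x in annulus n j, weightedPow γ β f x ^ p) ^ (1 / p)
      ≤ ENNReal.ofReal (t ^ (-(n / (2 * p)) : ℝ)) *
          (C * 2 ^ (j * (γ + n / p - β * (s + n * (q⁻¹).toReal))) * herzPiece s q f j ^ β) := by
        gcongr
        exact hannulus f hf j
    _ = _ := by
        rw [hradius, ENNReal.ofReal_mul (by positivity)]
        ring

/-- Near an annulus of radius `R`, the `L^p` bound governs times `t ≤ R^2` and the `L^1` bound
governs times `t ≥ R^2`. -/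
theorem exists_lintegral_annulus_heatKernel_mul_weightedPow_le_timeProfile (hβ : 0 < β)
    (hp : 1 ≤ p) (hq : ENNReal.ofReal (β * p) ≤ q)
    (hscale : β * (s + n * (q⁻¹).toReal) = γ + 2) :
    ∃ C ≠ ∞, ∀ f : Euc n → ℝ, Measurable f → ∀ j : ℤ, ∀ t > 0, ∀ y,
      ∫⁻ x in annulus n j, ENNReal.ofReal (heatKernel n t x y) * weightedPow γ β f x ≤
        C * herzPiece s q f j ^ β * timeProfile (n / (2 * p)) (n / 2) (2 ^ (2 * j : ℝ)) t := by
  have hq_one : ENNReal.ofReal (β * 1) ≤ q :=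
    (ofReal_le_ofReal (mul_le_mul_of_nonneg_left hp hβ.le)).trans hq
  obtain ⟨C, hC, hsmall⟩ :=
    exists_lintegral_annulus_heatKernel_mul_weightedPow_le hβ hp hq hscale
  obtain ⟨D, hD, hlarge⟩ :=
    exists_lintegral_annulus_heatKernel_mul_weightedPow_le hβ le_rfl hq_one hscale
  simp only [mul_one] at hlarge
  refine ⟨C + D, add_ne_top.2 ⟨hC, hD⟩, fun f hf j t ht y => ?_⟩
  rw [timeProfile, ← min_mul_mul_left]
  refine le_min ((hsmall f hf j t ht y).trans ?_) ((hlarge f hf j t ht y).trans ?_)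
  · gcongr
    exact le_self_add
  · gcongr
    exact le_add_self

theorem exists_lt_and_ofReal_mul_le (hβ : 0 < β) (hq : 0 < q)
    (hscale : β * (s + n * (q⁻¹).toReal) = γ + 2) (hγ : γ < β * s) :
    ∃ p : ℝ, n / 2 < p ∧ ENNReal.ofReal (β * p) ≤ q := by
  have hsub : β * (n * (q⁻¹).toReal) < 2 := by linarith
  rcases eq_or_ne q ∞ with rfl | hq_top
  · exact ⟨n / 2 + 1, lt_add_one _, le_top⟩
  · have hq_pos : 0 < q.toReal := toReal_pos hq.ne' hq_top
    refine ⟨q.toReal / β, ?_, ?_⟩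
    · rw [toReal_inv, ← mul_assoc, ← div_eq_mul_inv, div_lt_iff₀ hq_pos] at hsub
      rw [lt_div_iff₀ hβ]
      linarith
    · rw [mul_div_cancel₀ _ hβ.ne', ofReal_toReal hq_top]

theorem exists_katoBoundOn_weightedPow (hn : 2 < n) (hq : 0 < q) (hr : 0 < r)
    (hrβ : r ≤ ENNReal.ofReal β) (hscale : β * (s + n * (q⁻¹).toReal) = γ + 2) (hγ : γ < β * s) :
    ∃ C ≠ ∞, ∀ f : Euc n → ℝ, Measurable f →
      KatoBoundOn (fun t x y => ENNReal.ofReal (heatKernel n t x y)) volume (weightedPow γ β f)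
        (Ioi 0) (C * herzNorm n s q r f ^ β) := by
  have : NeZero n := ⟨by omega⟩
  have hβ : 0 < β := ENNReal.ofReal_pos.1 (hr.trans_le hrβ)
  obtain ⟨p, hp, hpq⟩ := exists_lt_and_ofReal_mul_le (n := n) hβ hq hscale hγ
  have hn_real : (2 : ℝ) < n := mod_cast hn
  have hb : 1 < (n / 2 : ℝ) := by linarith
  have hp_pos : 0 < p := one_pos.trans (hb.trans hp)
  have ha : n / (2 * p) < 1 := by
    rw [div_lt_one (by positivity)]
    linarith
  obtain ⟨C, hC, hannulus⟩ :=
    exists_lintegral_annulus_heatKernel_mul_weightedPow_le_timeProfile hβ (hb.trans hp).le hpq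
      hscale
  set ψ : ℤ → ℝ → ℝ≥0∞ := fun j => timeProfile (n / (2 * p)) (n / 2) (2 ^ (2 * j : ℝ))
  have hψ_meas (j : ℤ) : Measurable (ψ j) := measurable_timeProfile _ _ _
  set S := ENNReal.ofReal (1 / (1 - n / (2 * p))) + ENNReal.ofReal (1 / ((n / 2 : ℝ) - 1))
  refine ⟨C * S, mul_ne_top hC (add_ne_top.2 ⟨ofReal_ne_top, ofReal_ne_top⟩), fun f hf =>
    ⟨fun t => ∑' j, C * herzPiece s q f j ^ β * ψ j t, by fun_prop, fun t ht y => ?_, ?_⟩⟩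
  · rw [lintegral_eq_tsum_annulus]
    exact ENNReal.tsum_le_tsum fun j => hannulus f hf j t ht y
  · calc ∫⁻ t in Ioi 0, ∑' j, C * herzPiece s q f j ^ β * ψ j t
        = ∑' j, C * herzPiece s q f j ^ β * ∫⁻ t in Ioi 0, ψ j t := by
          rw [lintegral_tsum fun j => by fun_prop]
          simp only [lintegral_const_mul _ (hψ_meas _)]
      _ ≤ ∑' j, C * S * herzPiece s q f j ^ β := by
          refine ENNReal.tsum_le_tsum fun j => ?_
          rw [mul_right_comm C S]
          gcongr
          exact lintegral_timeProfile_le ha hb (by positivity)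
      _ ≤ C * S * herzNorm n s q r f ^ β := by
          rw [ENNReal.tsum_mul_left]
          gcongr
          exact tsum_herzPiece_rpow_le hr hrβ f

end HeatKato

section HerzContinuity

variable {n : ℕ} {γ s β a : ℝ} {q r η : ℝ≥0∞} {u : ℝ → Euc n → ℝ} {I : Set ℝ}

namespace HerzContinuousOn

theorem tendsto_herzNorm_sub (hu : HerzContinuousOn n s q r u I) (ha : a ∈ I) :
    Tendsto (fun t => herzNorm n s q r (u t - u a)) (𝓝[I] a) (𝓝 0) := by
  refine ENNReal.tendsto_nhds_zero.2 fun ε hε => ?_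
  obtain ⟨ε', hε', hε'_lt⟩ := ENNReal.lt_iff_exists_nnreal_btwn.1 hε
  obtain ⟨δ, hδ, hclose⟩ := hu a ha ε' (by exact_mod_cast hε')
  filter_upwards [self_mem_nhdsWithin, mem_nhdsWithin_of_mem_nhds (Metric.ball_mem_nhds a hδ)]
    with t ht htδ
  refine (hclose t ht htδ).le.trans ?_
  rw [ofReal_coe_nnreal]
  exact hε'_lt.le

theorem tendsto_const_mul_herzNorm_sub_rpow {C : ℝ≥0∞} (hu : HerzContinuousOn n s q r u I)
    (ha : a ∈ I) (hC : C ≠ ∞) (hβ : 0 < β) :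
    Tendsto (fun t => C * herzNorm n s q r (u t - u a) ^ β) (𝓝[I] a) (𝓝 0) := by
  have hpow := (hu.tendsto_herzNorm_sub ha).ennrpow_const β
  rw [ENNReal.zero_rpow_of_pos hβ] at hpow
  simpa using ENNReal.Tendsto.const_mul hpow (.inr hC)

theorem tendsto_lintegral_weightedPow_sub [NeZero n] (hu : HerzContinuousOn n s q r u I)
    (hu_meas : ∀ t, Measurable (u t)) (ha : a ∈ I) (hr : 0 < r) (hrβ : r ≤ ENNReal.ofReal β)
    (hq : ENNReal.ofReal β ≤ q) (hscale : β * (s + n * (q⁻¹).toReal) = γ + n) :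
    Tendsto (fun t => ∫⁻ x, weightedPow γ β (u t - u a) x) (𝓝[I] a) (𝓝 0) := by
  have hβ : 0 < β := ENNReal.ofReal_pos.1 (hr.trans_le hrβ)
  obtain ⟨D, hD, hbound⟩ := exists_lintegral_weightedPow_le hr hrβ hq hscale
  exact tendsto_of_tendsto_of_tendsto_of_le_of_le tendsto_const_nhds
    (hu.tendsto_const_mul_herzNorm_sub_rpow ha hD hβ) (fun _ => zero_le)
    fun t => hbound _ ((hu_meas t).sub (hu_meas a))

theorem exists_eventually_lintegral_weightedPow_le [NeZero n]
    (hu : HerzContinuousOn n s q r u I) (hu_meas : ∀ t, Measurable (u t)) (ha : a ∈ I)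
    (hua : herzNorm n s q r (u a) ≠ ∞) (hr : 0 < r) (hrβ : r ≤ ENNReal.ofReal β)
    (hq : ENNReal.ofReal β ≤ q) (hscale : β * (s + n * (q⁻¹).toReal) = γ + n) :
    ∃ M ≠ ∞, ∀ᶠ t in 𝓝[I] a, ∫⁻ x, weightedPow γ β (u t) x ≤ M := by
  have hβ : 0 < β := ENNReal.ofReal_pos.1 (hr.trans_le hrβ)
  obtain ⟨D, hD, hbound⟩ := exists_lintegral_weightedPow_le hr hrβ hq hscale
  have hua_int : ∫⁻ x, weightedPow γ β (u a) x ≠ ∞ := ne_top_of_le_ne_top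
    (mul_ne_top hD (rpow_ne_top_of_nonneg hβ.le hua)) (hbound _ (hu_meas a))
  refine ⟨2 ^ β * (1 + ∫⁻ x, weightedPow γ β (u a) x),
    mul_ne_top (rpow_ne_top_of_nonneg hβ.le ofNat_ne_top)
      (add_ne_top.2 ⟨one_ne_top, hua_int⟩), ?_⟩
  filter_upwards [(hu.tendsto_lintegral_weightedPow_sub hu_meas ha hr hrβ hq
    hscale).eventually_le_const one_pos] with t ht
  have hquasi := lintegral_weightedPow_add_le (γ := γ) hβ.le ((hu_meas t).sub (hu_meas a)) (u a)
  rw [sub_add_cancel] at hquasi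
  exact hquasi.trans (by gcongr)

/-- Convergence of `u t` to `u a` in the Herz quasi-norm implies convergence in the weighted space
`L^β(|x|^γ dx)`, where limits are unique. -/
theorem ae_eq_of_frequently_ae_eq [NeZero n] {v : ℝ → Euc n → ℝ}
    (hu : HerzContinuousOn n s q r u I) (hv : HerzContinuousOn n s q r v I)
    (hu_meas : ∀ t, Measurable (u t)) (hv_meas : ∀ t, Measurable (v t)) (ha : a ∈ I)
    (hr : 0 < r) (hrβ : r ≤ ENNReal.ofReal β) (hq : ENNReal.ofReal β ≤ q)
    (hscale : β * (s + n * (q⁻¹).toReal) = γ + n) (hfreq : ∃ᶠ t in 𝓝[I] a, u t =ᵐ[volume] v t) :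
    u a =ᵐ[volume] v a := by
  have hβ : 0 < β := ENNReal.ofReal_pos.1 (hr.trans_le hrβ)
  have htwo : (2 : ℝ≥0∞) ^ β ≠ ∞ := rpow_ne_top_of_nonneg hβ.le ofNat_ne_top
  have hlim : Tendsto (fun t => 2 ^ β * ((∫⁻ x, weightedPow γ β (u t - u a) x) +
      ∫⁻ x, weightedPow γ β (v t - v a) x)) (𝓝[I] a) (𝓝 0) := by
    simpa using ENNReal.Tendsto.const_mul
      ((hu.tendsto_lintegral_weightedPow_sub hu_meas ha hr hrβ hq hscale).add
        (hv.tendsto_lintegral_weightedPow_sub hv_meas ha hr hrβ hq hscale)) (.inr htwo)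
  have hzero : ∫⁻ x, weightedPow γ β (u a - v a) x = 0 := by
    refine le_antisymm (ge_of_tendsto_of_frequently hlim (hfreq.mono fun t ht => ?_)) zero_le
    have hsplit : u a - v a =ᵐ[volume] (u a - u t) + (v t - v a) := by
      filter_upwards [ht] with x hx
      simp only [Pi.sub_apply, Pi.add_apply, hx]
      ring
    calc ∫⁻ x, weightedPow γ β (u a - v a) x
        = ∫⁻ x, weightedPow γ β ((u a - u t) + (v t - v a)) x :=
          lintegral_congr_ae (hsplit.mono fun x hx => by simp only [weightedPow, hx])
      _ ≤ _ := lintegral_weightedPow_add_le hβ.le ((hu_meas a).sub (hu_meas t)) _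
      _ = _ := by rw [weightedPow_sub_comm]
  rw [lintegral_eq_zero_iff (measurable_weightedPow ((hu_meas a).sub (hv_meas a)))] at hzero
  filter_upwards [hzero, Measure.ae_ne volume (0 : Euc n)] with x hx hx_ne
  exact sub_eq_zero.1 ((weightedPow_eq_zero_iff hβ hx_ne).1 hx)

theorem exists_eventually_katoBoundOn_weightedPow (hu : HerzContinuousOn n s q r u I)
    (hu_meas : ∀ t, Measurable (u t)) (ha : a ∈ I) (hua : herzNorm n s q r (u a) ≠ ∞) (hn : 2 < n)
    (hq : 0 < q) (hr : 0 < r) (hrβ : r ≤ ENNReal.ofReal β)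
    (hscale : β * (s + n * (q⁻¹).toReal) = γ + 2) (hγ : γ < β * s) (hη : η ≠ 0) :
    ∃ d > 0, ∀ᶠ t in 𝓝[I] a,
      KatoBoundOn (fun θ x y => ENNReal.ofReal (heatKernel n θ x y)) volume
        (weightedPow γ β (u t)) (Ioo 0 d) η := by
  have hβ : 0 < β := ENNReal.ofReal_pos.1 (hr.trans_le hrβ)
  have htwo : (2 : ℝ≥0∞) ^ β ≠ ∞ := rpow_ne_top_of_nonneg hβ.le ofNat_ne_top
  obtain ⟨C, hC, hkato⟩ := exists_katoBoundOn_weightedPow hn hq hr hrβ hscale hγ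
  set ε := η / 2 ^ β / 2
  have hε : 2 ^ β * (ε + ε) = η := by
    rw [ENNReal.add_halves, ENNReal.mul_div_cancel (by positivity) htwo]
  have hε_pos : 0 < ε := ENNReal.half_pos (ENNReal.div_pos hη htwo).ne'
  obtain ⟨d, hd, hkato_a⟩ := (hkato (u a) (hu_meas a)).exists_Ioo
    (mul_ne_top hC (rpow_ne_top_of_nonneg hβ.le hua)) hε_pos.ne'
  refine ⟨d, hd, ?_⟩
  filter_upwards [(hu.tendsto_const_mul_herzNorm_sub_rpow ha hC hβ).eventually_le_const
    hε_pos] with t ht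
  have hdiff_meas : Measurable (u t - u a) := (hu_meas t).sub (hu_meas a)
  have hkato_diff := (hkato _ hdiff_meas).mono (J := Ioo 0 d) le_rfl Ioo_subset_Ioi_self ht
  have hkato_sum := (hkato_diff.add hkato_a (fun θ y => by fun_prop)
    (measurable_weightedPow hdiff_meas)).const_smul htwo
  exact hkato_sum.mono (by simpa using weightedPow_add_le hβ.le (u t - u a) (u a)) subset_rfl hε.le

end HerzContinuousOn

end HerzContinuity

section DifferenceEquation

variable {n : ℕ} {γ α T : ℝ} {f g : Euc n → ℝ}

/-- The potential `α |x|^γ (|f|^{α-1} + |g|^{α-1})` of the linear inequality satisfied by the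
difference of two solutions `f` and `g` of the Hardy–Hénon equation. -/
def differencePotential (γ α : ℝ) (f g : Euc n → ℝ) : Euc n → ℝ≥0∞ :=
  ENNReal.ofReal α • (weightedPow γ (α - 1) f + weightedPow γ (α - 1) g)

theorem enorm_nonlin_sub_le (hα : 1 ≤ α) (f g : Euc n → ℝ) (x : Euc n) :
    ‖nonlin n γ α f x - nonlin n γ α g x‖ₑ ≤ differencePotential γ α f g x * ‖f x - g x‖ₑ := by
  have hα_sub : 0 ≤ α - 1 := sub_nonneg.2 hα
  have hlip := norm_rpow_smul_sub_le hα_sub (f x) (g x)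
  simp only [smul_eq_mul, sub_add_cancel] at hlip
  have hfactor : nonlin n γ α f x - nonlin n γ α g x =
      ‖x‖ ^ γ * (‖f x‖ ^ (α - 1) * f x - ‖g x‖ ^ (α - 1) * g x) := by
    simp only [nonlin, Real.norm_eq_abs]
    ring
  calc ‖nonlin n γ α f x - nonlin n γ α g x‖ₑ
      = ENNReal.ofReal (‖x‖ ^ γ) *
          ENNReal.ofReal ‖‖f x‖ ^ (α - 1) * f x - ‖g x‖ ^ (α - 1) * g x‖ := by
        rw [hfactor, enorm_mul, Real.enorm_of_nonneg (by positivity), ofReal_norm]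
    _ ≤ ENNReal.ofReal (‖x‖ ^ γ) *
          ENNReal.ofReal (α * (‖f x‖ ^ (α - 1) + ‖g x‖ ^ (α - 1)) * ‖f x - g x‖) := by
        gcongr
    _ = differencePotential γ α f g x * ‖f x - g x‖ₑ := by
        rw [ENNReal.ofReal_mul (by positivity), ENNReal.ofReal_mul (by positivity),
          ENNReal.ofReal_add (by positivity) (by positivity),
          ← ENNReal.ofReal_rpow_of_nonneg (norm_nonneg _) hα_sub,
          ← ENNReal.ofReal_rpow_of_nonneg (norm_nonneg _) hα_sub, ofReal_norm, ofReal_norm,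
          ofReal_norm]
        simp only [differencePotential, weightedPow, Pi.smul_apply, Pi.add_apply, smul_eq_mul]
        ring

theorem differencePotential_mul_enorm_sub_le (hα : 1 ≤ α) (f g : Euc n → ℝ) (x : Euc n) :
    differencePotential γ α f g x * ‖f x - g x‖ₑ ≤
      ENNReal.ofReal α * (4 * (weightedPow γ α f x + weightedPow γ α g x)) := by
  have hpow := add_rpow_mul_add_le (sub_nonneg.2 hα) ‖f x‖ₑ ‖g x‖ₑ
  rw [sub_add_cancel] at hpow
  have hdiff : (‖f x‖ₑ ^ (α - 1) + ‖g x‖ₑ ^ (α - 1)) * ‖f x - g x‖ₑ ≤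
      4 * (‖f x‖ₑ ^ α + ‖g x‖ₑ ^ α) :=
    (mul_le_mul_right enorm_sub_le _).trans hpow
  simp only [differencePotential, weightedPow, Pi.smul_apply, Pi.add_apply, smul_eq_mul]
  calc ENNReal.ofReal α * (ENNReal.ofReal (‖x‖ ^ γ) * ‖f x‖ₑ ^ (α - 1) +
        ENNReal.ofReal (‖x‖ ^ γ) * ‖g x‖ₑ ^ (α - 1)) * ‖f x - g x‖ₑ
      = ENNReal.ofReal α * (ENNReal.ofReal (‖x‖ ^ γ) *
          ((‖f x‖ₑ ^ (α - 1) + ‖g x‖ₑ ^ (α - 1)) * ‖f x - g x‖ₑ)) := by ring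
    _ ≤ ENNReal.ofReal α * (ENNReal.ofReal (‖x‖ ^ γ) * (4 * (‖f x‖ₑ ^ α + ‖g x‖ₑ ^ α))) := by
        gcongr _ * (_ * ?_)
    _ = _ := by ring

theorem eq_of_differencePotential_mul_enorm_sub_eq_zero (hα : 1 < α) {x : Euc n} (hx : x ≠ 0)
    (hzero : differencePotential γ α f g x * ‖f x - g x‖ₑ = 0) : f x = g x := by
  have hα_ne : ENNReal.ofReal α ≠ 0 := (ENNReal.ofReal_pos.2 (one_pos.trans hα)).ne'
  have hα_sub : 0 < α - 1 := sub_pos.2 hα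
  rcases mul_eq_zero.1 hzero with hpot | hsub
  · rw [differencePotential, Pi.smul_apply, smul_eq_mul, mul_eq_zero_iff_left hα_ne, Pi.add_apply,
      add_eq_zero, weightedPow_eq_zero_iff hα_sub hx, weightedPow_eq_zero_iff hα_sub hx] at hpot
    rw [hpot.1, hpot.2]
  · exact sub_eq_zero.1 (enorm_eq_zero.1 hsub)

theorem measurable_uncurry_differencePotential {u v : ℝ → Euc n → ℝ}
    (hu : Measurable (Function.uncurry u)) (hv : Measurable (Function.uncurry v)) :
    Measurable (Function.uncurry fun t => differencePotential γ α (u t) (v t)) := by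
  unfold Function.uncurry at *
  simp only [differencePotential, weightedPow, Pi.smul_apply, Pi.add_apply, smul_eq_mul]
  fun_prop

theorem IsMildSolution.ae_enorm_sub_le {u₀ : Euc n → ℝ} {u v : ℝ → Euc n → ℝ} (hα : 1 ≤ α)
    (hu : IsMildSolution n γ α T u₀ u) (hv : IsMildSolution n γ α T u₀ v) :
    ∀ᵐ p : ℝ × Euc n ∂(volume.restrict (Ioo 0 T)).prod volume, ‖u p.1 p.2 - v p.1 p.2‖ₑ ≤
      ∫⁻ z, ENNReal.ofReal (heatKernel n (p.1 - z.1) p.2 z.2) *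
        (differencePotential γ α (u z.1) (v z.1) z.2 * ‖u z.1 z.2 - v z.1 z.2‖ₑ)
        ∂(volume.restrict (Ioo 0 p.1)).prod volume := by
  filter_upwards [hu.2, hv.2] with ⟨t, x⟩ ⟨_, hu_int, hu_eq⟩ ⟨_, hv_int, hv_eq⟩
  have htime : ∀ᵐ z : ℝ × Euc n ∂(volume.restrict (Ioo 0 t)).prod volume, z.1 ∈ Ioo 0 t :=
    Measure.quasiMeasurePreserving_fst.ae (ae_restrict_mem measurableSet_Ioo)
  dsimp only at *
  rw [hu_eq, hv_eq, add_sub_add_left_eq_sub, ← integral_sub hu_int hv_int]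
  refine (enorm_integral_le_lintegral_enorm _).trans (lintegral_mono_ae ?_)
  filter_upwards [htime] with z hz
  rw [← mul_sub, enorm_mul,
    Real.enorm_of_nonneg (heatKernel_nonneg (sub_nonneg.2 hz.2.le) x z.2)]
  gcongr
  exact enorm_nonlin_sub_le hα _ _ _

end DifferenceEquation

section Uniqueness

variable {n : ℕ} {γ α s a T : ℝ} {q r η : ℝ≥0∞} {u v : ℝ → Euc n → ℝ} {I : Set ℝ}

namespace HerzContinuousOn

theorem exists_eventually_lintegral_differencePotential_mul_le [NeZero n]
    (hu : HerzContinuousOn n s q r u I) (hv : HerzContinuousOn n s q r v I)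
    (hu_meas : ∀ t, Measurable (u t)) (hv_meas : ∀ t, Measurable (v t)) (ha : a ∈ I)
    (hua : herzNorm n s q r (u a) ≠ ∞) (hva : herzNorm n s q r (v a) ≠ ∞) (hα : 1 ≤ α)
    (hr : 0 < r) (hrα : r ≤ ENNReal.ofReal α) (hq : ENNReal.ofReal α ≤ q)
    (hscale : α * (s + n * (q⁻¹).toReal) = γ + n) :
    ∃ M ≠ ∞, ∀ᶠ t in 𝓝[I] a,
      ∫⁻ x, differencePotential γ α (u t) (v t) x * ‖u t x - v t x‖ₑ ≤ M := by
  obtain ⟨M₁, hM₁, hu_int⟩ :=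
    hu.exists_eventually_lintegral_weightedPow_le hu_meas ha hua hr hrα hq hscale
  obtain ⟨M₂, hM₂, hv_int⟩ :=
    hv.exists_eventually_lintegral_weightedPow_le hv_meas ha hva hr hrα hq hscale
  refine ⟨ENNReal.ofReal α * (4 * (M₁ + M₂)), by finiteness, ?_⟩
  filter_upwards [hu_int, hv_int] with t hut hvt
  calc ∫⁻ x, differencePotential γ α (u t) (v t) x * ‖u t x - v t x‖ₑ
      ≤ ∫⁻ x, ENNReal.ofReal α * (4 * (weightedPow γ α (u t) x + weightedPow γ α (v t) x)) :=
        lintegral_mono (differencePotential_mul_enorm_sub_le hα _ _)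
    _ = ENNReal.ofReal α * (4 * ((∫⁻ x, weightedPow γ α (u t) x) +
          ∫⁻ x, weightedPow γ α (v t) x)) := by
        rw [lintegral_const_mul' _ _ ofReal_ne_top, lintegral_const_mul' _ _ ofNat_ne_top,
          lintegral_add_left (measurable_weightedPow (hu_meas t))]
    _ ≤ ENNReal.ofReal α * (4 * (M₁ + M₂)) := by gcongr

theorem exists_eventually_katoBoundOn_differencePotential
    (hu : HerzContinuousOn n s q r u I) (hv : HerzContinuousOn n s q r v I)
    (hu_meas : ∀ t, Measurable (u t)) (hv_meas : ∀ t, Measurable (v t)) (ha : a ∈ I)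
    (hua : herzNorm n s q r (u a) ≠ ∞) (hva : herzNorm n s q r (v a) ≠ ∞) (hn : 2 < n)
    (hq : 0 < q) (hr : 0 < r) (hrα : r ≤ ENNReal.ofReal (α - 1))
    (hscale : (α - 1) * (s + n * (q⁻¹).toReal) = γ + 2) (hγ : γ < (α - 1) * s) (hη : η ≠ 0) :
    ∃ d > 0, ∀ᶠ t in 𝓝[I] a,
      KatoBoundOn (fun θ x y => ENNReal.ofReal (heatKernel n θ x y)) volume
        (differencePotential γ α (u t) (v t)) (Ioo 0 d) η := by
  have hα : 0 < α := by linarith [ENNReal.ofReal_pos.1 (hr.trans_le hrα)]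
  set ε := η / ENNReal.ofReal α / 2
  have hε : ENNReal.ofReal α * (ε + ε) = η := by
    rw [ENNReal.add_halves, ENNReal.mul_div_cancel (ENNReal.ofReal_pos.2 hα).ne' ofReal_ne_top]
  have hε_ne : ε ≠ 0 := (ENNReal.half_pos (ENNReal.div_pos hη ofReal_ne_top).ne').ne'
  obtain ⟨d₁, hd₁, hu_kato⟩ := hu.exists_eventually_katoBoundOn_weightedPow hu_meas ha hua hn hq hr
    hrα hscale hγ hε_ne
  obtain ⟨d₂, hd₂, hv_kato⟩ := hv.exists_eventually_katoBoundOn_weightedPow hv_meas ha hva hn hq hr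
    hrα hscale hγ hε_ne
  refine ⟨min d₁ d₂, lt_min hd₁ hd₂, ?_⟩
  filter_upwards [hu_kato, hv_kato] with t hut hvt
  have hut' := hut.mono le_rfl (Ioo_subset_Ioo_right (min_le_left d₁ d₂)) le_rfl
  have hvt' := hvt.mono le_rfl (Ioo_subset_Ioo_right (min_le_right d₁ d₂)) le_rfl
  rw [← hε]
  exact (hut'.add hvt' (fun θ y => by fun_prop) (measurable_weightedPow (hu_meas t))).const_smul
    ofReal_ne_top

end HerzContinuousOn

theorem frequently_nhdsWithin_Icc_of_ae {p : ℝ → Prop} (hT : 0 < T)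
    (hp : ∀ᵐ t ∂volume.restrict (Ioo 0 T), p t) {t : ℝ} (ht : t ∈ Icc 0 T) :
    ∃ᶠ t' in 𝓝[Icc 0 T] t, p t' := by
  have hdense := Measure.dense_of_ae ((ae_restrict_iff' measurableSet_Ioo).1 hp)
  rw [← closure_Ioo hT.ne] at ht
  have hmem := closure_minimal (hdense.open_subset_closure_inter isOpen_Ioo) isClosed_closure ht
  exact frequently_nhdsWithin_iff.2 <| (mem_closure_iff_frequently.1 hmem).mono
    fun t' ht' => ⟨ht'.2 ht'.1, Ioo_subset_Icc_self ht'.1⟩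

theorem mul_add_mul_eq_of_div_add_eq {m b c k : ℝ} (hm : m ≠ 0) (hb : b ≠ 0)
    (h : s / m + k = c / (m * b)) : b * (s + m * k) = c := by
  field_simp at h
  linarith

theorem IsMildSolution.ae_ae_eq {u₀ : Euc n → ℝ} (hn : 2 < n) (hT : 0 < T) (hα : 1 < α)
    (hq : ENNReal.ofReal α ≤ q) (hr : 0 < r) (hrα : r ≤ ENNReal.ofReal (α - 1))
    (hscale_kato : (α - 1) * (s + n * (q⁻¹).toReal) = γ + 2)
    (hscale_int : α * (s + n * (q⁻¹).toReal) = γ + n) (hγ : γ < (α - 1) * s)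
    (hu : IsMildSolution n γ α T u₀ u) (hv : IsMildSolution n γ α T u₀ v)
    (hu_fin : ∀ t ∈ Icc 0 T, herzNorm n s q r (u t) < ∞)
    (hv_fin : ∀ t ∈ Icc 0 T, herzNorm n s q r (v t) < ∞)
    (hu_cont : HerzContinuousOn n s q r u (Icc 0 T))
    (hv_cont : HerzContinuousOn n s q r v (Icc 0 T)) :
    ∀ᵐ t ∂volume.restrict (Ioo 0 T), u t =ᵐ[volume] v t := by
  have : NeZero n := ⟨by omega⟩
  have hu_meas : ∀ t, Measurable (u t) := fun t => hu.1.of_uncurry_left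
  have hv_meas : ∀ t, Measurable (v t) := fun t => hv.1.of_uncurry_left
  have hq_pos : 0 < q := (ENNReal.ofReal_pos.2 (one_pos.trans hα)).trans_le hq
  have hrα' : r ≤ ENNReal.ofReal α :=
    hrα.trans (ENNReal.ofReal_le_ofReal (sub_le_self α zero_le_one))
  have hzero : ∀ᵐ t ∂volume.restrict (Ioo 0 T), ∀ᵐ x,
      differencePotential γ α (u t) (v t) x * ‖u t x - v t x‖ₑ = 0 := by
    refine ae_mul_eq_zero_of_duhamel (K := fun θ x y => ENNReal.ofReal (heatKernel n θ x y)) hT.le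
      (measurable_heatKernel n).ennreal_ofReal
      (measurable_uncurry_differencePotential hu.1 hv.1) (hu.1.sub hv.1).enorm
      (hu.ae_enorm_sub_le hα.le hv) fun a ha => ?_
    have ha' := Ico_subset_Icc_self ha
    have hright : 𝓝[>] a ≤ 𝓝[Icc 0 T] a := nhdsWithin_le_of_mem (Icc_mem_nhdsGT_of_mem ha)
    obtain ⟨M, hM, hint⟩ := hu_cont.exists_eventually_lintegral_differencePotential_mul_le hv_cont
      hu_meas hv_meas ha' (hu_fin a ha').ne (hv_fin a ha').ne hα.le hr hrα' hq hscale_int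
    obtain ⟨d, hd, hkato⟩ := hu_cont.exists_eventually_katoBoundOn_differencePotential hv_cont
      hu_meas hv_meas ha' (hu_fin a ha').ne (hv_fin a ha').ne hn hq_pos hr hrα hscale_kato hγ
      (ENNReal.inv_ne_zero.2 (ofNat_ne_top (n := 2)))
    exact ⟨M, hM, 2⁻¹, ENNReal.inv_lt_one.2 ENNReal.one_lt_two, d, hd,
      (hint.filter_mono hright).and (hkato.filter_mono hright)⟩
  filter_upwards [hzero] with t ht
  filter_upwards [ht, Measure.ae_ne volume (0 : Euc n)] with x hx hx_ne
  exact eq_of_differencePotential_mul_enorm_sub_eq_zero hα hx_ne hx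

theorem uniqueness_double_critical_general (hn : 3 ≤ n) (hα : 1 < α) (hs : γ / (α - 1) < s)
    (hq : ENNReal.ofReal α ≤ q) (hr : 0 < r) (hrα : r ≤ ENNReal.ofReal (α - 1))
    (hcrit₁ : s / (n : ℝ) + (q⁻¹).toReal = (2 + γ) / ((n : ℝ) * (α - 1)))
    (hcrit₂ : (2 + γ) / ((n : ℝ) * (α - 1)) = ((n : ℝ) + γ) / ((n : ℝ) * α))
    (hT : 0 < T) {u₀ : Euc n → ℝ}
    (hu : IsMildSolution n γ α T u₀ u) (hv : IsMildSolution n γ α T u₀ v)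
    (hu_fin : ∀ t ∈ Icc 0 T, herzNorm n s q r (u t) < ∞)
    (hv_fin : ∀ t ∈ Icc 0 T, herzNorm n s q r (v t) < ∞)
    (hu_cont : HerzContinuousOn n s q r u (Icc 0 T))
    (hv_cont : HerzContinuousOn n s q r v (Icc 0 T)) :
    ∀ t ∈ Icc 0 T, u t =ᵐ[volume] v t := by
  have : NeZero n := ⟨by omega⟩
  have hn_ne : (n : ℝ) ≠ 0 := NeZero.ne _
  have hscale_kato : (α - 1) * (s + n * (q⁻¹).toReal) = γ + 2 :=
    (mul_add_mul_eq_of_div_add_eq hn_ne (sub_pos.2 hα).ne' hcrit₁).trans (add_comm _ _)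
  have hscale_int : α * (s + n * (q⁻¹).toReal) = γ + n :=
    (mul_add_mul_eq_of_div_add_eq hn_ne (one_pos.trans hα).ne' (hcrit₁.trans hcrit₂)).trans
      (add_comm _ _)
  have hγ : γ < (α - 1) * s := (div_lt_iff₀' (sub_pos.2 hα)).1 hs
  have hae := hu.ae_ae_eq hn hT hα hq hr hrα hscale_kato hscale_int hγ hv hu_fin hv_fin hu_cont
    hv_cont
  intro t ht
  exact hu_cont.ae_eq_of_frequently_ae_eq hv_cont (fun t => hu.1.of_uncurry_left)
    (fun t => hv.1.of_uncurry_left) ht hr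
    (hrα.trans (ENNReal.ofReal_le_ofReal (sub_le_self α zero_le_one))) hq hscale_int
    (frequently_nhdsWithin_Icc_of_ae hT hae ht)

end Uniqueness

/-- Unconditional uniqueness for the Hardy–Hénon equation in the double critical case
`s/n + 1/q = 1/q_c = 1/Q_c`, with either (`q < ∞` and `r ≤ α - 1`) or `r ≤ min(1, α-1)`,
for continuous-in-time solutions with values in the closure `𝒦̇^s_{q,r}` of `C_c^∞`. -/
theorem uniqueness_double_critical
    (n : ℕ) (hn : 3 ≤ n) (γ α s T : ℝ) (q r : ℝ≥0∞)
    (hγ : -(min 2 (n : ℝ)) < γ) (hα : 1 < α)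
    (hα' : max 1 (1 + γ / (n : ℝ)) ≤ α)
    (hs1 : γ / (α - 1) < s) (hs2 : s ≤ (n : ℝ))
    (hq : ENNReal.ofReal α ≤ q) (hr : 0 < r)
    (hpos : 0 < s / (n : ℝ) + (q⁻¹).toReal)
    (hwd2 : s / (n : ℝ) + (q⁻¹).toReal < 1 ∨
      (s / (n : ℝ) + (q⁻¹).toReal = 1 ∧ r ≤ 1))
    (hcrit₁ : s / (n : ℝ) + (q⁻¹).toReal = (2 + γ) / ((n : ℝ) * (α - 1)))
    (hcrit₂ : (2 + γ) / ((n : ℝ) * (α - 1)) = ((n : ℝ) + γ) / ((n : ℝ) * α))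
    (hcase : (q < ⊤ ∧ r ≤ ENNReal.ofReal (α - 1)) ∨ r ≤ min 1 (ENNReal.ofReal (α - 1)))
    (hT : 0 < T) (u₀ : Euc n → ℝ) (hu₀ : MemHerzClosure n s q r u₀)
    (u₁ u₂ : ℝ → Euc n → ℝ)
    (h₁ : IsMildSolution n γ α T u₀ u₁) (h₂ : IsMildSolution n γ α T u₀ u₂)
    (hi₁ : u₁ 0 = u₀) (hi₂ : u₂ 0 = u₀)
    (hm₁ : ∀ t ∈ Set.Icc (0 : ℝ) T, MemHerzClosure n s q r (u₁ t))
    (hm₂ : ∀ t ∈ Set.Icc (0 : ℝ) T, MemHerzClosure n s q r (u₂ t))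
    (hc₁ : HerzContinuousOn n s q r u₁ (Set.Icc 0 T))
    (hc₂ : HerzContinuousOn n s q r u₂ (Set.Icc 0 T)) :
    ∀ t ∈ Set.Icc (0 : ℝ) T, u₁ t =ᵐ[volume] u₂ t := by
  have hrα := hcase.elim And.right fun hr_le => hr_le.trans (min_le_right _ _)
  exact uniqueness_double_critical_general hn hα hs1 hq hr hrα hcrit₁ hcrit₂ hT h₁ h₂
    (fun t ht => (hm₁ t ht).1) (fun t ht => (hm₂ t ht).1) hc₁ hc₂
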